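/- Let N ≥ 1, let P_i denote the i-th Legendre polynomial, and let p̄₀(τ) = 1, p̄_i(τ) = P_i(2τ−1) − (−1)^i for i = 1,…,N (the modified Legendre basis). Let (σ̄ᵢ,γ̄ᵢ)_{i=1..N+1} be a quadrature on [0,1] with positive weights exact for degree 2N, and set V̄_{iα} = p̄_{α−1}(σ̄ᵢ), Γ̄ = diag(γ̄ᵢ^{1/2}). Then every eigenvalue of V̄ᵀΓ̄²V̄ is at most N+2; equivalently, the largest singular value of Γ̄V̄ is at most (N+2)^{1/2}. -/

import Mathlib

open MeasureTheory Matrix Polynomial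
open scoped BigOperators

/-- A quadrature rule on `[0,1]` with nodes `0 ≤ σ₁ < … < σ_M ≤ 1` and positive weights,
exact for all polynomials of degree `≤ d`. -/
def IsQuad {M : ℕ} (σ γ : Fin M → ℝ) (d : ℕ) : Prop :=
  (∀ i, σ i ∈ Set.Icc (0:ℝ) 1) ∧ StrictMono σ ∧ (∀ i, 0 < γ i) ∧
    ∀ q : Polynomial ℝ, q.natDegree ≤ d →
      ∑ i, γ i * q.eval (σ i) = ∫ s in (0:ℝ)..1, q.eval s

/-- `Γ = diag(γᵢ^{1/2})`. -/
noncomputable def Gmat {M : ℕ} (γ : Fin M → ℝ) : Matrix (Fin M) (Fin M) ℝ :=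
  Matrix.diagonal fun i => Real.sqrt (γ i)

/-- `s` is a singular value of `A`: `s ≥ 0` and `s²` is an eigenvalue of `AᵀA`. -/
def IsSingVal {I J : Type} [Fintype I] [Fintype J] (A : Matrix I J ℝ) (s : ℝ) : Prop :=
  0 ≤ s ∧ ∃ v : J → ℝ, v ≠ 0 ∧ (Aᵀ * A).mulVec v = s ^ 2 • v

/-- The `i`-th Legendre polynomial, via Rodrigues' formula
`P_i(x) = (1/(2^i i!)) (d/dx)^i (x²-1)^i`. -/
noncomputable def legendre (i : ℕ) : Polynomial ℝ :=
  Polynomial.C (1 / (2 ^ i * (Nat.factorial i : ℝ))) *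
    Polynomial.derivative^[i] ((Polynomial.X ^ 2 - 1) ^ i)

/-- The modified Legendre basis functions: `p̄₀(τ) = 1` and
`p̄ᵢ(τ) = Pᵢ(2τ-1) - (-1)^i` for `i ≥ 1`. -/
noncomputable def mlp (i : ℕ) (τ : ℝ) : ℝ :=
  if i = 0 then 1 else (legendre i).eval (2 * τ - 1) - (-1) ^ i

/-!
Since `p̄_i` differs from the shifted Legendre polynomial `P_i(2τ-1)` by a constant, passing from
one basis to the other changes only the zeroth coordinate of `v`, to a signed sum of the coordinates
of `v`; by Cauchy–Schwarz the new coordinates `w` satisfy `|w|² ≤ (N + 2) |v|²`. The quadratic form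
of `V̄ᵀΓ̄²V̄` at `v` is the quadrature of the square of a polynomial of degree at most `N`, hence
equals the squared `L²(0,1)` norm of that polynomial. As the shifted Legendre polynomials are
orthogonal with squared norms `1 / (2i + 1) ≤ 1`, this is at most `|w|²`.
-/

section DerivativesOfPolynomials

lemma eval_iterate_derivative_pow_eq_zero {R : Type*} [CommSemiring R] {p : R[X]} {c : R}
    (hp : p.IsRoot c) {k n : ℕ} (hk : k < n) : (derivative^[k] (p ^ n)).eval c = 0 := by
  have hdvd : p ∣ derivative^[k] (p ^ n) :=
    (dvd_pow_self p (Nat.sub_ne_zero_of_lt hk)).trans (pow_sub_dvd_iterate_derivative_pow p n k)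
  exact hp.dvd hdvd

lemma iterate_derivative_natDegree {R : Type*} [Semiring R] (p : R[X]) :
    derivative^[p.natDegree] p = C (p.natDegree.factorial * p.leadingCoeff) := by
  have hdeg : (derivative^[p.natDegree] p).natDegree = 0 := by
    simpa using natDegree_iterate_derivative p p.natDegree
  rw [eq_C_of_natDegree_eq_zero hdeg, coeff_iterate_derivative]
  simp [Nat.descFactorial_self, nsmul_eq_mul]

end DerivativesOfPolynomials

section IntegrationByParts

variable {a b : ℝ}

lemma integral_mul_derivative_of_isRoot {p : ℝ[X]} (ha : p.IsRoot a) (hb : p.IsRoot b)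
    (q : ℝ[X]) :
    ∫ x in a..b, (q * derivative p).eval x = -∫ x in a..b, (derivative q * p).eval x := by
  have hparts := intervalIntegral.integral_mul_deriv_eq_deriv_mul
    (fun x _ => q.hasDerivAt x) (fun x _ => p.hasDerivAt x)
    ((derivative q).continuous.intervalIntegrable a b)
    ((derivative p).continuous.intervalIntegrable a b)
  simpa only [eval_mul, ha.eq_zero, hb.eq_zero, mul_zero, sub_zero, zero_sub] using hparts

lemma integral_mul_iterate_derivative_of_isRoot {p : ℝ[X]} {n : ℕ}
    (ha : ∀ k < n, (derivative^[k] p).IsRoot a) (hb : ∀ k < n, (derivative^[k] p).IsRoot b)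
    (q : ℝ[X]) :
    ∫ x in a..b, (q * derivative^[n] p).eval x =
      (-1) ^ n * ∫ x in a..b, (derivative^[n] q * p).eval x := by
  induction n generalizing q with
  | zero => simp
  | succ n ih =>
    rw [Function.iterate_succ_apply',
      integral_mul_derivative_of_isRoot (ha n n.lt_succ_self) (hb n n.lt_succ_self),
      ih (fun k hk => ha k (hk.trans n.lt_succ_self)) (fun k hk => hb k (hk.trans n.lt_succ_self)),
      Function.iterate_succ_apply, pow_succ]
    ring

end IntegrationByParts

section Legendre

lemma natDegree_X_sq_sub_one_pow (n : ℕ) : ((X ^ 2 - 1 : ℝ[X]) ^ n).natDegree = 2 * n := by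
  rw [natDegree_pow, ← C_1, natDegree_X_pow_sub_C, mul_comm]

lemma monic_X_sq_sub_one_pow (n : ℕ) : ((X ^ 2 - 1 : ℝ[X]) ^ n).Monic := by
  rw [← C_1]
  exact (monic_X_pow_sub_C 1 two_ne_zero).pow n

lemma natDegree_legendre_le (n : ℕ) : (legendre n).natDegree ≤ n := by
  calc (legendre n).natDegree
      ≤ (derivative^[n] ((X ^ 2 - 1 : ℝ[X]) ^ n)).natDegree := natDegree_C_mul_le _ _
    _ ≤ ((X ^ 2 - 1 : ℝ[X]) ^ n).natDegree - n := natDegree_iterate_derivative _ _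
    _ = n := by rw [natDegree_X_sq_sub_one_pow]; lia

lemma iterate_derivative_legendre (n : ℕ) :
    derivative^[n] (legendre n) = C ((2 * n).factorial / (2 ^ n * n.factorial) : ℝ) := by
  have htop : derivative^[2 * n] ((X ^ 2 - 1 : ℝ[X]) ^ n) = C ((2 * n).factorial : ℝ) := by
    have hlead := iterate_derivative_natDegree ((X ^ 2 - 1 : ℝ[X]) ^ n)
    rwa [natDegree_X_sq_sub_one_pow, (monic_X_sq_sub_one_pow n).leadingCoeff, mul_one] at hlead
  rw [legendre, iterate_derivative_C_mul, ← Function.iterate_add_apply, ← two_mul, htop, ← C_mul,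
    one_div_mul_eq_div]

lemma integral_mul_legendre (q : ℝ[X]) (n : ℕ) :
    ∫ x in (-1 : ℝ)..1, (q * legendre n).eval x =
      1 / (2 ^ n * n.factorial) *
        ∫ x in (-1 : ℝ)..1, (derivative^[n] q).eval x * (1 - x ^ 2) ^ n := by
  have hroot (c : ℝ) (hc : c ^ 2 = 1) :
      ∀ k < n, (derivative^[k] ((X ^ 2 - 1 : ℝ[X]) ^ n)).IsRoot c :=
    fun k hk => eval_iterate_derivative_pow_eq_zero (by simp [hc]) hk
  have hparts := integral_mul_iterate_derivative_of_isRoot (hroot (-1) (by norm_num))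
    (hroot 1 (by norm_num)) q
  have hsign (x : ℝ) : (1 - x ^ 2) ^ n = (-1) ^ n * (x ^ 2 - 1) ^ n := by
    rw [← mul_pow]; ring
  calc ∫ x in (-1 : ℝ)..1, (q * legendre n).eval x
      = 1 / (2 ^ n * n.factorial) *
          ∫ x in (-1 : ℝ)..1, (q * derivative^[n] ((X ^ 2 - 1) ^ n)).eval x := by
        simp only [legendre, mul_left_comm q, eval_C_mul, intervalIntegral.integral_const_mul]
    _ = _ := by
        rw [hparts]
        simp only [hsign, mul_left_comm _ ((-1 : ℝ) ^ n), intervalIntegral.integral_const_mul,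
          eval_mul, eval_pow, eval_sub, eval_X, eval_one]

lemma integral_one_sub_sq_pow_succ (n : ℕ) :
    (2 * n + 3 : ℝ) * ∫ x in (-1 : ℝ)..1, (1 - x ^ 2) ^ (n + 1) =
      (2 * (n + 1) : ℝ) * ∫ x in (-1 : ℝ)..1, (1 - x ^ 2) ^ n := by
  have hderiv (x : ℝ) : HasDerivAt (fun x : ℝ => x * (1 - x ^ 2) ^ (n + 1))
      ((2 * n + 3) * (1 - x ^ 2) ^ (n + 1) - 2 * (n + 1) * (1 - x ^ 2) ^ n) x := by
    have hpow := (((hasDerivAt_id' x).fun_pow 2).const_sub 1).fun_pow (n + 1)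
    refine ((hasDerivAt_id' x).fun_mul hpow).congr_deriv ?_
    push_cast
    ring
  have hcont (m : ℕ) (c : ℝ) :
      IntervalIntegrable (fun x : ℝ => c * (1 - x ^ 2) ^ m) volume (-1) 1 :=
    Continuous.intervalIntegrable (by fun_prop) _ _
  have hftc := intervalIntegral.integral_eq_sub_of_hasDerivAt (fun x _ => hderiv x)
    ((hcont (n + 1) _).sub (hcont n _))
  rw [intervalIntegral.integral_sub (hcont _ _) (hcont _ _), intervalIntegral.integral_const_mul,
    intervalIntegral.integral_const_mul] at hftc
  simpa [sub_eq_zero] using hftc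

lemma integral_one_sub_sq_pow (n : ℕ) :
    ∫ x in (-1 : ℝ)..1, (1 - x ^ 2) ^ n =
      2 * (2 ^ n * n.factorial : ℝ) ^ 2 / (2 * n + 1).factorial := by
  induction n with
  | zero => norm_num
  | succ n ih =>
    have hrec := integral_one_sub_sq_pow_succ n
    rw [ih] at hrec
    rw [← mul_right_inj' (by positivity : (2 * n + 3 : ℝ) ≠ 0), hrec,
      show 2 * (n + 1) + 1 = 2 * n + 1 + 1 + 1 by ring]
    simp only [Nat.factorial_succ (2 * n + 1 + 1), Nat.factorial_succ (2 * n + 1),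
      Nat.factorial_succ n]
    push_cast
    field_simp
    ring

lemma integral_legendre_mul_legendre_of_lt {m n : ℕ} (h : m < n) :
    ∫ x in (-1 : ℝ)..1, (legendre m * legendre n).eval x = 0 := by
  rw [integral_mul_legendre, iterate_derivative_eq_zero ((natDegree_legendre_le m).trans_lt h)]
  simp

lemma integral_legendre_mul_self (n : ℕ) :
    ∫ x in (-1 : ℝ)..1, (legendre n * legendre n).eval x = 2 / (2 * n + 1) := by
  simp only [integral_mul_legendre, iterate_derivative_legendre, eval_C,
    intervalIntegral.integral_const_mul, integral_one_sub_sq_pow, Nat.factorial_succ (2 * n)]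
  push_cast
  field_simp

lemma integral_legendre_mul_legendre (m n : ℕ) :
    ∫ x in (-1 : ℝ)..1, (legendre m * legendre n).eval x =
      if m = n then 2 / (2 * n + 1 : ℝ) else 0 := by
  rcases lt_trichotomy m n with h | rfl | h
  · rw [integral_legendre_mul_legendre_of_lt h, if_neg h.ne]
  · rw [integral_legendre_mul_self, if_pos rfl]
  · rw [mul_comm, integral_legendre_mul_legendre_of_lt h, if_neg h.ne']

end Legendre

section UnitLegendre

/-- The Legendre polynomial `P_n(2τ-1)` transported to `[0,1]`. It differs by the sign `(-1)^n`
from Mathlib's `Polynomial.shiftedLegendre`, which has integer coefficients. -/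
noncomputable def unitLegendre (n : ℕ) : ℝ[X] :=
  (legendre n).comp (C 2 * X - C 1)

lemma eval_unitLegendre (n : ℕ) (τ : ℝ) :
    (unitLegendre n).eval τ = (legendre n).eval (2 * τ - 1) := by
  simp [unitLegendre]

lemma unitLegendre_zero : unitLegendre 0 = 1 := by
  simp [unitLegendre, legendre]

lemma natDegree_unitLegendre_le (n : ℕ) : (unitLegendre n).natDegree ≤ n := by
  have hlin : (C 2 * X - C 1 : ℝ[X]).natDegree ≤ 1 := by compute_degree
  simpa only [mul_one, unitLegendre] using
    natDegree_comp_le.trans (Nat.mul_le_mul (natDegree_legendre_le n) hlin)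

lemma integral_unitLegendre_mul_unitLegendre (m n : ℕ) :
    ∫ τ in (0 : ℝ)..1, (unitLegendre m).eval τ * (unitLegendre n).eval τ =
      if m = n then 1 / (2 * n + 1 : ℝ) else 0 := by
  have hsubst := intervalIntegral.integral_comp_mul_sub (a := 0) (b := 1)
    (fun x => (legendre m * legendre n).eval x) two_ne_zero 1
  simp only [eval_unitLegendre, ← eval_mul, hsubst]
  rw [show (2 * 0 - 1 : ℝ) = -1 by norm_num, show (2 * 1 - 1 : ℝ) = 1 by norm_num,
    integral_legendre_mul_legendre, smul_eq_mul, mul_ite, mul_zero]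
  congr 1
  ring

lemma integral_sq_sum_unitLegendre {M : ℕ} (w : Fin M → ℝ) :
    ∫ τ in (0 : ℝ)..1, (∑ α, w α * (unitLegendre α).eval τ) ^ 2 =
      ∑ α, w α ^ 2 / (2 * (α : ℕ) + 1) := by
  have hexpand (τ : ℝ) : (∑ α, w α * (unitLegendre α).eval τ) ^ 2 =
      ∑ α, ∑ β, w α * w β * ((unitLegendre α).eval τ * (unitLegendre β).eval τ) := by
    simp only [sq, Finset.sum_mul_sum, mul_mul_mul_comm]
  simp only [hexpand]
  rw [intervalIntegral.integral_finsetSum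
    fun α _ => Continuous.intervalIntegrable (by fun_prop) _ _]
  refine Finset.sum_congr rfl fun α _ => ?_
  rw [intervalIntegral.integral_finsetSum
    fun β _ => Continuous.intervalIntegrable (by fun_prop) _ _]
  simp only [intervalIntegral.integral_const_mul, integral_unitLegendre_mul_unitLegendre,
    Fin.val_inj, mul_ite, mul_zero, Finset.sum_ite_eq, Finset.mem_univ, if_true]
  ring

end UnitLegendre

section ModifiedBasis

variable {N : ℕ}

/-- The coordinates in the basis `unitLegendre 0, …, unitLegendre N` of the polynomial whose
coordinates in the modified Legendre basis `mlp 0, …, mlp N` are `v`. -/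
def legendreCoord (v : Fin (N + 1) → ℝ) : Fin (N + 1) → ℝ :=
  Fin.cons (v 0 - ∑ i : Fin N, (-1) ^ (i + 1 : ℕ) * v i.succ) (Fin.tail v)

lemma sum_mul_mlp (v : Fin (N + 1) → ℝ) (τ : ℝ) :
    ∑ α, v α * mlp α τ = ∑ α, legendreCoord v α * (unitLegendre α).eval τ := by
  have hmlp (i : Fin N) : mlp i.succ τ = (unitLegendre i.succ).eval τ - (-1) ^ (i + 1 : ℕ) := by
    rw [Fin.val_succ, mlp, if_neg (Nat.succ_ne_zero _), eval_unitLegendre]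
  have hmlp_zero : mlp 0 τ = 1 := if_pos rfl
  simp only [Fin.sum_univ_succ, hmlp, legendreCoord, Fin.cons_zero, Fin.cons_succ, Fin.tail,
    Fin.val_zero, hmlp_zero, unitLegendre_zero, eval_one, mul_sub, Finset.sum_sub_distrib,
    mul_comm (v _) ((-1) ^ _)]
  ring

lemma sum_sq_legendreCoord_le (v : Fin (N + 1) → ℝ) :
    ∑ α, legendreCoord v α ^ 2 ≤ (N + 2) * ∑ α, v α ^ 2 := by
  let u : Fin (N + 1) → ℝ := Fin.cons (v 0) fun i => (-1) ^ (i : ℕ) * v i.succ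
  have hu : ∑ α, u α = legendreCoord v 0 := by
    simp [u, Fin.sum_univ_succ, legendreCoord, pow_succ]
  have hu_sq : ∑ α, u α ^ 2 = ∑ α, v α ^ 2 := by
    simp [u, Fin.sum_univ_succ, mul_pow, ← pow_mul, mul_comm _ 2]
  have hhead : legendreCoord v 0 ^ 2 ≤ (N + 1) * ∑ α, v α ^ 2 := by
    simpa [hu, hu_sq] using sq_sum_le_card_mul_sum_sq (s := Finset.univ) (f := u)
  have htail : ∑ i : Fin N, legendreCoord v i.succ ^ 2 ≤ ∑ α, v α ^ 2 := by
    rw [Fin.sum_univ_succ (fun α => v α ^ 2)]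
    simpa [legendreCoord, Fin.tail] using sq_nonneg (v 0)
  rw [Fin.sum_univ_succ]
  linarith

lemma quadrature_sq_sum_mlp_le {ι : Type*} [Fintype ι] {σ γ : ι → ℝ}
    (hexact : ∀ q : ℝ[X], q.natDegree ≤ 2 * N →
      ∑ i, γ i * q.eval (σ i) = ∫ s in (0 : ℝ)..1, q.eval s)
    (v : Fin (N + 1) → ℝ) :
    ∑ i, γ i * (∑ α, v α * mlp α (σ i)) ^ 2 ≤ (N + 2) * ∑ α, v α ^ 2 := by
  let f : ℝ[X] := ∑ α, C (legendreCoord v α) * unitLegendre α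
  have hf_eval (τ : ℝ) : f.eval τ = ∑ α, legendreCoord v α * (unitLegendre α).eval τ := by
    simp [f, eval_finsetSum]
  have hf_deg : f.natDegree ≤ N := natDegree_sum_le_of_forall_le _ _ fun α _ =>
    (natDegree_C_mul_le _ _).trans ((natDegree_unitLegendre_le α).trans α.is_le)
  calc ∑ i, γ i * (∑ α, v α * mlp α (σ i)) ^ 2
      = ∑ i, γ i * (f ^ 2).eval (σ i) := by simp only [sum_mul_mlp, eval_pow, hf_eval]
    _ = ∫ τ in (0 : ℝ)..1, (f ^ 2).eval τ := hexact _ (natDegree_pow_le_of_le 2 hf_deg)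
    _ = ∑ α, legendreCoord v α ^ 2 / (2 * (α : ℕ) + 1) := by
        simp only [eval_pow, hf_eval, integral_sq_sum_unitLegendre]
    _ ≤ ∑ α, legendreCoord v α ^ 2 := Finset.sum_le_sum fun α _ =>
        div_le_self (sq_nonneg _) (by linarith [(α : ℕ).cast_nonneg (α := ℝ)])
    _ ≤ (N + 2) * ∑ α, v α ^ 2 := sum_sq_legendreCoord_le v

end ModifiedBasis

section GramMatrix

lemma le_of_mulVec_eq_smul {n : Type*} [Fintype n] {A : Matrix n n ℝ} {c μ : ℝ} {v : n → ℝ}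
    (hv : v ≠ 0) (hμ : A *ᵥ v = μ • v) (hA : v ⬝ᵥ A *ᵥ v ≤ c * (v ⬝ᵥ v)) : μ ≤ c := by
  rw [hμ, dotProduct_smul, smul_eq_mul] at hA
  exact le_of_mul_le_mul_right hA (dotProduct_star_self_pos_iff.2 hv)

lemma IsSingVal.le_sqrt {I J : Type} [Fintype I] [Fintype J] {A : Matrix I J ℝ} {c s : ℝ}
    (hs : IsSingVal A s)
    (hA : ∀ (μ : ℝ) (v : J → ℝ), v ≠ 0 → (Aᵀ * A) *ᵥ v = μ • v → μ ≤ c) : s ≤ √c := by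
  obtain ⟨-, v, hv, hsv⟩ := hs
  exact Real.le_sqrt_of_sq_le (hA _ v hv hsv)

variable {M : ℕ} {n : Type*}

lemma transpose_mul_self_Gmat_mul (γ : Fin M → ℝ) (V : Matrix (Fin M) n ℝ) :
    (Gmat γ * V)ᵀ * (Gmat γ * V) = Vᵀ * Gmat γ ^ 2 * V := by
  simp only [transpose_mul, Gmat, diagonal_transpose, sq, Matrix.mul_assoc]

lemma Gmat_sq {γ : Fin M → ℝ} (hγ : ∀ i, 0 ≤ γ i) : Gmat γ ^ 2 = diagonal γ := by
  rw [Gmat, diagonal_pow]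
  exact congrArg diagonal (funext fun i => Real.sq_sqrt (hγ i))

lemma dotProduct_transpose_mul_Gmat_sq_mul_mulVec [Fintype n] {γ : Fin M → ℝ} (hγ : ∀ i, 0 ≤ γ i)
    (V : Matrix (Fin M) n ℝ) (v : n → ℝ) :
    v ⬝ᵥ (Vᵀ * Gmat γ ^ 2 * V) *ᵥ v = ∑ i, γ i * (V *ᵥ v) i ^ 2 := by
  rw [Gmat_sq hγ, Matrix.mul_assoc, ← mulVec_mulVec, dotProduct_transpose_mulVec, ← mulVec_mulVec]
  exact Finset.sum_congr rfl fun i _ => by rw [mulVec_diagonal]; ring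

end GramMatrix

theorem stmt8_general {M N : ℕ} {σ γ : Fin M → ℝ} (hγ : ∀ i, 0 ≤ γ i)
    (hexact : ∀ q : ℝ[X], q.natDegree ≤ 2 * N →
      ∑ i, γ i * q.eval (σ i) = ∫ s in (0 : ℝ)..1, q.eval s)
    {V : Matrix (Fin M) (Fin (N + 1)) ℝ} (hV : ∀ i α, V i α = mlp (α : ℕ) (σ i)) :
    (∀ (μ : ℝ) (v : Fin (N + 1) → ℝ), v ≠ 0 →
        (Vᵀ * Gmat γ ^ 2 * V).mulVec v = μ • v → μ ≤ (N : ℝ) + 2) ∧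
    (∀ s : ℝ, IsSingVal (Gmat γ * V) s → s ≤ Real.sqrt ((N : ℝ) + 2)) := by
  have hVv (v : Fin (N + 1) → ℝ) (i : Fin M) : (V *ᵥ v) i = ∑ α, v α * mlp α (σ i) := by
    simp only [mulVec, dotProduct, hV, mul_comm]
  have hquad (v : Fin (N + 1) → ℝ) :
      v ⬝ᵥ (Vᵀ * Gmat γ ^ 2 * V) *ᵥ v ≤ (N + 2) * (v ⬝ᵥ v) := by
    rw [dotProduct_transpose_mul_Gmat_sq_mul_mulVec hγ]
    simpa only [hVv, dotProduct, ← sq] using quadrature_sq_sum_mlp_le hexact v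
  have heig (μ : ℝ) (v : Fin (N + 1) → ℝ) (hv : v ≠ 0)
      (hμ : (Vᵀ * Gmat γ ^ 2 * V) *ᵥ v = μ • v) : μ ≤ N + 2 :=
    le_of_mulVec_eq_smul hv hμ (hquad v)
  refine ⟨heig, fun s hs => hs.le_sqrt ?_⟩
  rwa [transpose_mul_self_Gmat_mul]

theorem stmt8 (N : ℕ) (hN : 1 ≤ N)
    (σb γb : Fin (N + 1) → ℝ) (hqb : IsQuad σb γb (2 * N))
    (Vb : Matrix (Fin (N + 1)) (Fin (N + 1)) ℝ)
    (hVb : ∀ i α, Vb i α = mlp (α : ℕ) (σb i)) :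
    (∀ (μ : ℝ) (v : Fin (N + 1) → ℝ), v ≠ 0 →
        (Vbᵀ * Gmat γb ^ 2 * Vb).mulVec v = μ • v → μ ≤ (N : ℝ) + 2) ∧
    (∀ s : ℝ, IsSingVal (Gmat γb * Vb) s → s ≤ Real.sqrt ((N : ℝ) + 2)) := by
  obtain ⟨-, -, hγ, hexact⟩ := hqb
  exact stmt8_general (fun i => (hγ i).le) hexact hVb
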